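/- The function φ_0 is radial around v_0, satisfies φ_0(v_0) = 1 and μ_1 φ_0 = 0; moreover, every function f : V → ℂ that is radial around v_0 and satisfies μ_1 f = 0 vanishes at every vertex at odd distance from v_0 (that is, on V_−). -/

import Mathlib

open scoped BigOperators ComplexOrder

/-- A semi-homogeneous tree `T_{q_+,q_-}`: a connected acyclic simple graph with a
parity function `eps` (true = `+`, false = `−`) that flips across edges, in which every
vertex of parity `+` has exactly `qp + 1` neighbors and every vertex of parity `−` has
exactly `qm + 1` neighbors.  Spheres are finite (this follows from local finiteness
and connectedness, and is recorded as a field for convenience). -/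
structure SemiHomTree (qp qm : ℕ) (V : Type) where
  G : SimpleGraph V
  connected : G.Connected
  acyclic : G.IsAcyclic
  eps : V → Bool
  adj_parity : ∀ ⦃v w : V⦄, G.Adj v w → eps w = !eps v
  nbr_finite : ∀ v : V, {w : V | G.Adj v w}.Finite
  degree_plus : ∀ v : V, eps v = true → {w : V | G.Adj v w}.ncard = qp + 1
  degree_minus : ∀ v : V, eps v = false → {w : V | G.Adj v w}.ncard = qm + 1
  sphere_finite : ∀ (v : V) (n : ℕ), {w : V | G.dist v w = n}.Finite

/-- The averaging operator `M_n`: average of `f` over the sphere of radius `n` around `v`. -/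
noncomputable def Mop {qp qm : ℕ} {V : Type} (T : SemiHomTree qp qm V)
    (n : ℕ) (f : V → ℂ) (v : V) : ℂ :=
  (({w : V | T.G.dist v w = n}.ncard : ℂ))⁻¹ * ∑ᶠ w ∈ {w : V | T.G.dist v w = n}, f w

/-- The Laplace operator `μ₁`: the average of `f` over the neighbors of `v`. -/
noncomputable def lap {qp qm : ℕ} {V : Type} (T : SemiHomTree qp qm V)
    (f : V → ℂ) (v : V) : ℂ :=
  (((if T.eps v then qp else qm : ℕ) : ℂ) + 1)⁻¹ * ∑ᶠ w ∈ {w : V | T.G.Adj v w}, f w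

/-!
At a vertex at distance `n + 1` from the root of a tree, one neighbor lies at distance `n` and the
remaining ones at distance `n + 2`. For a radial function with profile `F`, harmonicity therefore
reads `F 1 = 0` at the root and `F n + q * F (n + 2) = 0` elsewhere, where `q` is `q_-` or `q_+`
according to whether `n` is even or odd. On odd distances `F 1 = 0` propagates to `F = 0`; on even
distances the recurrence starting from `F 0 = 1` is solved by `F (2 * k) = (-q_-) ^ (-k)`.
-/

/-- The profile of `φ_0`: its value at distance `n` from the root, where `q` stands for `q_-`. -/
noncomputable def phiProfile (q n : ℕ) : ℂ :=
  if Even n then (-1 : ℂ) ^ (n / 2) * ((q : ℂ) ^ (n / 2))⁻¹ else 0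

lemma phiProfile_of_odd (q : ℕ) {n : ℕ} (hn : Odd n) : phiProfile q n = 0 :=
  if_neg (Nat.not_even_iff_odd.mpr hn)

lemma phiProfile_two_mul (q k : ℕ) : phiProfile q (2 * k) = (-1 : ℂ) ^ k * ((q : ℂ) ^ k)⁻¹ := by
  simp [phiProfile]

lemma phiProfile_add_mul_phiProfile_add_two {q n : ℕ} (hq : q ≠ 0) (hn : Even n) :
    phiProfile q n + q * phiProfile q (n + 2) = 0 := by
  obtain ⟨k, rfl⟩ := hn.two_dvd
  have hq' : (q : ℂ) ≠ 0 := Nat.cast_ne_zero.mpr hq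
  rw [← Nat.mul_succ, phiProfile_two_mul, phiProfile_two_mul, pow_succ, pow_succ]
  field_simp
  ring

lemma finsum_mem_eq_ncard_nsmul {α M : Type*} [AddCommMonoid M] {s : Set α} {f : α → M} {c : M}
    (h : ∀ a ∈ s, f a = c) : ∑ᶠ a ∈ s, f a = s.ncard • c := by
  rw [finsum_mem_congr rfl h]
  rcases s.finite_or_infinite with hs | hs
  · rw [finsum_mem_eq_finite_toFinset_sum _ hs, Finset.sum_const, Set.ncard_eq_toFinset_card s hs]
  · rcases eq_or_ne c 0 with rfl | hc
    · simp
    · rw [hs.ncard, zero_nsmul]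
      exact finsum_mem_eq_zero_of_infinite (by simpa [Function.support_const hc])

section RadialSums

variable {V M : Type*} [AddCommMonoid M] {G : SimpleGraph V} {u v w w' : V} {n : ℕ}

lemma exists_adj_dist_eq_of_dist_eq_succ (h : G.dist u v = n + 1) :
    ∃ w, G.Adj v w ∧ G.dist u w = n := by
  obtain ⟨p, hp⟩ := SimpleGraph.exists_walk_of_dist_ne_zero (G := G) (u := u) (v := v) (by omega)
  have hnil : ¬ p.Nil := SimpleGraph.Walk.length_eq_zero_iff.not.mp (by omega)
  have hadj := p.adj_penultimate hnil
  have hle : G.dist u p.penultimate ≤ p.dropLast.length := SimpleGraph.dist_le _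
  have hlen := SimpleGraph.Walk.length_dropLast_add_one hnil
  have hdiff := hadj.diff_dist_adj (u := u)
  exact ⟨p.penultimate, hadj.symm, by omega⟩

lemma eq_of_adj_of_dist_eq_succ (hG : G.IsAcyclic) (hw : G.Adj v w) (hw' : G.Adj v w')
    (hd : G.dist u v = G.dist u w + 1) (hd' : G.dist u v = G.dist u w' + 1) : w = w' := by
  have hreach : G.Reachable u v := SimpleGraph.Reachable.of_dist_ne_zero (by omega)
  obtain ⟨p, hp⟩ := (hreach.trans hw.reachable).exists_walk_length_eq_dist
  obtain ⟨p', hp'⟩ := (hreach.trans hw'.reachable).exists_walk_length_eq_dist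
  have hpath : (p.concat hw.symm).IsPath :=
    SimpleGraph.Walk.isPath_of_length_eq_dist _ (by simp [hp, hd])
  have hpath' : (p'.concat hw'.symm).IsPath :=
    SimpleGraph.Walk.isPath_of_length_eq_dist _ (by simp [hp', hd'])
  have heq : p.concat hw.symm = p'.concat hw'.symm :=
    congrArg Subtype.val ((hG.subsingleton_path u v).elim ⟨_, hpath⟩ ⟨_, hpath'⟩)
  exact (SimpleGraph.Walk.concat_inj heq).1

lemma finsum_adj_radial_self (F : ℕ → M) :
    ∑ᶠ w ∈ {w | G.Adj v w}, F (G.dist v w) = {w | G.Adj v w}.ncard • F 1 :=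
  finsum_mem_eq_ncard_nsmul fun _ hw ↦ by rw [SimpleGraph.dist_eq_one_iff_adj.mpr hw]

lemma finsum_adj_radial_of_dist_eq_succ (hG : G.IsAcyclic) {q : ℕ}
    (hq : {w | G.Adj v w}.ncard = q + 1) (hv : G.dist u v = n + 1) (F : ℕ → M) :
    ∑ᶠ w ∈ {w | G.Adj v w}, F (G.dist u w) = F n + q • F (n + 2) := by
  obtain ⟨p, hp, hpd⟩ := exists_adj_dist_eq_of_dist_eq_succ hv
  have hmem : p ∈ {w | G.Adj v w} := hp
  have hfin : {w | G.Adj v w}.Finite := Set.finite_of_ncard_ne_zero (by omega)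
  have houter : ∀ w ∈ {w | G.Adj v w} \ {p}, F (G.dist u w) = F (n + 2) := by
    rintro w ⟨hw, hne⟩
    have hreach : G.Reachable u v := SimpleGraph.Reachable.of_dist_ne_zero (by omega)
    rcases hG.dist_eq_dist_add_one_of_adj_of_reachable u hw hreach with h | h
    · exact absurd (eq_of_adj_of_dist_eq_succ hG hw hp h (by omega)) hne
    · rw [h, hv]
  have hcard : ({w | G.Adj v w} \ {p}).ncard = q := by
    rw [Set.ncard_sdiff_singleton_of_mem hmem, hq, Nat.add_sub_cancel]
  rw [← Set.insert_sdiff_self_of_mem hmem, finsum_mem_insert _ (by simp) hfin.sdiff, hpd,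
    finsum_mem_eq_ncard_nsmul houter, hcard]

end RadialSums

namespace SemiHomTree

variable {qp qm : ℕ} {V : Type} (T : SemiHomTree qp qm V)

/-- The number `q_{ε(v)}`, one less than the degree of `v`. -/
def branching (v : V) : ℕ := if T.eps v then qp else qm

lemma ncard_adj (v : V) : {w | T.G.Adj v w}.ncard = T.branching v + 1 := by
  cases h : T.eps v
  · simpa [branching, h] using T.degree_minus v h
  · simpa [branching, h] using T.degree_plus v h

variable {T}

lemma branching_ne_zero {v w w' : V} (hw : T.G.Adj v w) (hw' : T.G.Adj v w') (hne : w ≠ w') :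
    T.branching v ≠ 0 := by
  have hcard : 1 < {w | T.G.Adj v w}.ncard :=
    (Set.one_lt_ncard (T.nbr_finite v)).mpr ⟨w, hw, w', hw', hne⟩
  rw [T.ncard_adj v] at hcard
  omega

variable (T)

lemma even_dist_iff (u v : V) : Even (T.G.dist u v) ↔ (T.eps u ↔ T.eps v) := by
  let parity : T.G.Coloring Bool := SimpleGraph.Coloring.mk T.eps fun h ↦ by
    simp [T.adj_parity h]
  obtain ⟨p, hp⟩ := T.connected.exists_walk_length_eq_dist u v
  exact hp ▸ parity.even_length_iff_congr p

lemma lap_eq_inv_mul_finsum (f : V → ℂ) (v : V) :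
    lap T f v = ((T.branching v : ℂ) + 1)⁻¹ * ∑ᶠ w ∈ {w | T.G.Adj v w}, f w :=
  rfl

lemma lap_radial_root (v₀ : V) (F : ℕ → ℂ) : lap T (fun w ↦ F (T.G.dist v₀ w)) v₀ = F 1 := by
  have hq : (T.branching v₀ : ℂ) + 1 ≠ 0 := Nat.cast_add_one_ne_zero _
  rw [lap_eq_inv_mul_finsum, finsum_adj_radial_self, ncard_adj, nsmul_eq_mul, Nat.cast_succ,
    inv_mul_cancel_left₀ hq]

lemma lap_radial_eq_zero_iff {v₀ v : V} {n : ℕ} (hv : T.G.dist v₀ v = n + 1) (F : ℕ → ℂ) :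
    lap T (fun w ↦ F (T.G.dist v₀ w)) v = 0 ↔ F n + T.branching v * F (n + 2) = 0 := by
  have hq : ((T.branching v : ℂ) + 1)⁻¹ ≠ 0 := inv_ne_zero (Nat.cast_add_one_ne_zero _)
  rw [lap_eq_inv_mul_finsum, finsum_adj_radial_of_dist_eq_succ T.acyclic (T.ncard_adj v) hv,
    nsmul_eq_mul, mul_eq_zero_iff_left hq]

variable {T}

lemma branching_of_odd_dist {v₀ v : V} (hv₀ : T.eps v₀ = true) (hv : Odd (T.G.dist v₀ v)) :
    T.branching v = qm := by
  have hparity := (T.even_dist_iff v₀ v).not.mp (Nat.not_even_iff_odd.mpr hv)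
  exact if_neg fun h ↦ hparity (by simp only [hv₀, h])

lemma lap_phiProfile_dist (hqm : qm ≠ 0) {v₀ : V} (hv₀ : T.eps v₀ = true) (v : V) :
    lap T (fun w ↦ phiProfile qm (T.G.dist v₀ w)) v = 0 := by
  rcases hn : T.G.dist v₀ v with _ | n
  · obtain rfl : v₀ = v := T.connected.dist_eq_zero_iff.mp hn
    rw [T.lap_radial_root, phiProfile_of_odd qm odd_one]
  · rw [T.lap_radial_eq_zero_iff hn]
    rcases n.even_or_odd with heven | hodd
    · rw [branching_of_odd_dist hv₀ (hn ▸ heven.add_one),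
        phiProfile_add_mul_phiProfile_add_two hqm heven]
    · rw [phiProfile_of_odd qm hodd, phiProfile_of_odd qm (hodd.add_even even_two), mul_zero,
        add_zero]

lemma radial_eq_zero_of_odd_dist {v₀ : V} {F : ℕ → ℂ}
    (hF : ∀ v, lap T (fun w ↦ F (T.G.dist v₀ w)) v = 0) {v : V} (hv : Odd (T.G.dist v₀ v)) :
    F (T.G.dist v₀ v) = 0 := by
  obtain ⟨k, hk⟩ := hv
  rw [hk]
  induction k generalizing v with
  | zero => exact (T.lap_radial_root v₀ F).symm.trans (hF v₀)
  | succ k ih =>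
    obtain ⟨u, hvu, hu⟩ := exists_adj_dist_eq_of_dist_eq_succ hk
    obtain ⟨w, huw, hw⟩ := exists_adj_dist_eq_of_dist_eq_succ (n := 2 * k + 1) hu
    have hq : (T.branching u : ℂ) ≠ 0 :=
      Nat.cast_ne_zero.mpr (branching_ne_zero hvu.symm huw fun h ↦ by subst h; omega)
    have hrec := (T.lap_radial_eq_zero_iff (n := 2 * k + 1) hu F).mp (hF u)
    rw [ih hw, zero_add] at hrec
    exact (mul_eq_zero.mp hrec).resolve_left hq

end SemiHomTree

theorem stmt_2_general {qp qm : ℕ} (hqm : qm ≠ 0) {V : Type}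
    (T : SemiHomTree qp qm V) (v0 : V) (hv0 : T.eps v0 = true)
    (φ0 : V → ℂ)
    (hφ0 : ∀ v : V, φ0 v =
      if Even (T.G.dist v0 v)
        then (-1 : ℂ) ^ (T.G.dist v0 v / 2) * ((qm : ℂ) ^ (T.G.dist v0 v / 2))⁻¹
        else 0) :
    (∃ F : ℕ → ℂ, ∀ v : V, φ0 v = F (T.G.dist v0 v)) ∧
      φ0 v0 = 1 ∧
      (∀ v : V, lap T φ0 v = 0) ∧
      ∀ (f : V → ℂ) (F : ℕ → ℂ), (∀ v : V, f v = F (T.G.dist v0 v)) →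
        (∀ v : V, lap T f v = 0) → ∀ v : V, Odd (T.G.dist v0 v) → f v = 0 := by
  obtain rfl : φ0 = fun v ↦ phiProfile qm (T.G.dist v0 v) := funext hφ0
  refine ⟨⟨phiProfile qm, fun _ ↦ rfl⟩, ?_, SemiHomTree.lap_phiProfile_dist hqm hv0, ?_⟩
  · simp [phiProfile]
  · intro f F hf hharm v hv
    obtain rfl : f = fun v ↦ F (T.G.dist v0 v) := funext hf
    exact SemiHomTree.radial_eq_zero_of_odd_dist hharm hv

theorem stmt_2 {qp qm : ℕ} (hqp : 2 ≤ qp) (hqm : 2 ≤ qm) {V : Type}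
    (T : SemiHomTree qp qm V) (v0 : V) (hv0 : T.eps v0 = true)
    (φ0 : V → ℂ)
    (hφ0 : ∀ v : V, φ0 v =
      if Even (T.G.dist v0 v)
        then (-1 : ℂ) ^ (T.G.dist v0 v / 2) * ((qm : ℂ) ^ (T.G.dist v0 v / 2))⁻¹
        else 0) :
    (∃ F : ℕ → ℂ, ∀ v : V, φ0 v = F (T.G.dist v0 v)) ∧
      φ0 v0 = 1 ∧
      (∀ v : V, lap T φ0 v = 0) ∧
      ∀ (f : V → ℂ) (F : ℕ → ℂ), (∀ v : V, f v = F (T.G.dist v0 v)) →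
        (∀ v : V, lap T f v = 0) → ∀ v : V, Odd (T.G.dist v0 v) → f v = 0 :=
  stmt_2_general (by omega) T v0 hv0 φ0 hφ0
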